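/- Let n ≥ 1. Then the following identity of polynomials in ℚ[t] holds: n! · Σ_{π ∈ 𝔦_n} t^{lpk(π)} = Σ_{k=0, k ≡ n (mod 2)}^{n} d_{n,k} (1−t)^{(n−k)/2} P_k^{lpk}(t), where P_m^{lpk}(t) = Σ_{π ∈ S_m} t^{lpk(π)} and d_{n,k} is the number of permutations π of [n] such that π² has exactly k odd cycles (cycles of odd length, counting fixed points as cycles of length 1). (Moreover d_{n,k} = 0 unless k ≡ n (mod 2), so the exponents (n−k)/2 appearing are nonnegative integers.) -/

import Mathlib

open scoped Classical

noncomputable section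

def oneLine (n : ℕ) (π : Equiv.Perm (Fin n)) (i : ℕ) : ℕ :=
  if h : 1 ≤ i ∧ i ≤ n then (π ⟨i - 1, by omega⟩).val + 1 else 0

def des (n : ℕ) (π : Equiv.Perm (Fin n)) : ℕ :=
  ((Finset.Icc 1 (n - 1)).filter fun i => oneLine n π (i + 1) < oneLine n π i).card

def pk (n : ℕ) (π : Equiv.Perm (Fin n)) : ℕ :=
  ((Finset.Icc 2 (n - 1)).filter fun i =>
    oneLine n π (i - 1) < oneLine n π i ∧ oneLine n π (i + 1) < oneLine n π i).card

def lpk (n : ℕ) (π : Equiv.Perm (Fin n)) : ℕ :=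
  ((Finset.Icc 1 (n - 1)).filter fun i =>
    oneLine n π (i - 1) < oneLine n π i ∧ oneLine n π (i + 1) < oneLine n π i).card

def pval (n : ℕ) (π : Equiv.Perm (Fin n)) : ℕ :=
  ((Finset.Icc 2 (n - 1)).filter fun i =>
    oneLine n π i < oneLine n π (i - 1) ∧ oneLine n π i < oneLine n π (i + 1)).card

def udr (n : ℕ) (π : Equiv.Perm (Fin n)) : ℕ := lpk n π + pval n π + 1

def fullCycleType (n : ℕ) (π : Equiv.Perm (Fin n)) : Multiset ℕ :=
  π.cycleType + Multiset.replicate (n - π.support.card) 1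

def numCycles (n : ℕ) (π : Equiv.Perm (Fin n)) : ℕ := Multiset.card (fullCycleType n π)

def numOddCycles (n : ℕ) (π : Equiv.Perm (Fin n)) : ℕ :=
  Multiset.card ((fullCycleType n π).filter fun p => p % 2 = 1)

def IsCyclicPerm (n : ℕ) (π : Equiv.Perm (Fin n)) : Prop :=
  fullCycleType n π = {n}

def cyclicSet (n : ℕ) : Finset (Equiv.Perm (Fin n)) :=
  Finset.univ.filter fun π => IsCyclicPerm n π

def invSet (n : ℕ) : Finset (Equiv.Perm (Fin n)) :=
  Finset.univ.filter fun π => π ^ 2 = 1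

def eulerianA (m : ℕ) : Polynomial ℚ :=
  ∑ π : Equiv.Perm (Fin m), Polynomial.X ^ (des m π + 1)

def peakP (m : ℕ) : Polynomial ℚ :=
  ∑ π : Equiv.Perm (Fin m), Polynomial.X ^ (pk m π + 1)

def leftPeakP (m : ℕ) : Polynomial ℚ :=
  ∑ π : Equiv.Perm (Fin m), Polynomial.X ^ (lpk m π)

def cnk (n k : ℕ) : ℕ :=
  (Finset.univ.filter fun π : Equiv.Perm (Fin n) =>
    (∀ p ∈ fullCycleType n π, ¬ (4 ∣ p)) ∧ numCycles n (π ^ 2) = k).card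

def bnk (n k : ℕ) : ℕ :=
  (Finset.univ.filter fun π : Equiv.Perm (Fin n) => numCycles n (π ^ 2) = k).card

def dnk (n k : ℕ) : ℕ :=
  (Finset.univ.filter fun π : Equiv.Perm (Fin n) => numOddCycles n (π ^ 2) = k).card

/-!
Give the alphabet of the first `2k + 1` letters the signs `+, -, +, …, +` and call a weakly
increasing word compatible with `π` if `π` increases along its runs of a positive letter and
decreases along its runs of a negative one. For a fixed `π ∈ S_n`, the generating function in `k` of
the number of compatible words is `(1 + X)^n u^{lpk π} / (1 - X)^{n + 1}` with `u = 4X / (1 + X)²`;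
summed over `S_n`, these numbers give `(2k + 1)^n`, as every word has one standardization.

A pair of an involution and a word compatible with it is a sorted biword whose columns `(a, c)` and
`(c, a)` are equally many and which repeats no column with letters of opposite signs. Hence `n!`
times the number of these pairs is the number of pairs of such a biword, in any order, and a
permutation `π` of its columns that exchanges its rows. Weight a pair by the sign of `π²` on the
columns with negative top letter: this is `1` without repeated mixed columns, and multiplying `π` by
a transposition of two equal mixed columns changes it, so that admitting all biwords does not change
the sum. For a fixed `π`, the top rows of the biwords are the words fixed by `π²`, so the weights
factor over the cycles of `π²`: an odd cycle contributes `2k + 1` and an even one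
`1 - 1 + ⋯ + 1 = 1`.

Therefore `n! ∑_τ #{words compatible with τ} = ∑_m d_{n,m} (2k + 1)^m`, with `τ` ranging over the
involutions. Passing to generating functions, the factors `((1 - X) / (1 + X))^{n - m} =
(1 - u)^{(n - m) / 2}` appear, and the resulting identity in `u` is one of polynomials because
`u` is transcendental.
-/

section SignedKey

variable {A : Type*}

/-- The biletter `(a, x)` as an element of a linear order: letters `a` are compared first, and ties
are broken by the place `x`, read upwards if `a` is positive and downwards if `a` is negative. -/
def signedKey (ε : A → ℤˣ) (a : A) (x : ℤ) : A ×ₗ ℤ :=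
  toLex (a, ε a * x)

lemma signedKey_lt_iff [LinearOrder A] {ε : A → ℤˣ} {a b : A} {x y : ℤ} :
    signedKey ε a x < signedKey ε b y ↔ a < b ∨ a = b ∧ (ε a : ℤ) * x < ε a * y := by
  rw [signedKey, signedKey, Prod.Lex.toLex_lt_toLex]
  refine or_congr_right (and_congr_right fun h => ?_)
  rw [show a = b from h]

lemma signedKey_inj {ε : A → ℤˣ} {a b : A} {x y : ℤ} :
    signedKey ε a x = signedKey ε b y ↔ a = b ∧ x = y := by
  rw [signedKey, signedKey, toLex_inj, Prod.mk.injEq]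
  refine and_congr_right fun h => ?_
  rw [h, mul_right_inj' (ε b).ne_zero]

end SignedKey

section Compatible

variable {A : Type*} [LinearOrder A] {n : ℕ}

/-- The words `f` over the signed alphabet `(A, ε)` that are compatible with the word of places `x`:
`f` is weakly increasing, and `x` increases along each run of a positive letter of `f` and decreases
along each run of a negative one. For `x = π(1) ⋯ π(n)` these are the enriched `π`-partitions. -/
def Compatible (ε : A → ℤˣ) (x : Fin n → ℤ) (f : Fin n → A) : Prop :=
  StrictMono fun i => signedKey ε (f i) (x i)

/-- The number of words over the signed alphabet `(A, ε)` compatible with `x`. -/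
def compatibleCount [Fintype A] (ε : A → ℤˣ) (x : Fin n → ℤ) : ℕ :=
  (Finset.univ.filter fun f : Fin n → A => Compatible ε x f).card

/-- The one-line notation of `π`, shifted to have letters `0, …, n - 1`. -/
def permWord (π : Equiv.Perm (Fin n)) : Fin n → ℤ := fun i => (π i : ℤ)

lemma permWord_injective (π : Equiv.Perm (Fin n)) : Function.Injective (permWord π) :=
  Nat.cast_injective.comp (Fin.val_injective.comp π.injective)

lemma Compatible.monotone {ε : A → ℤˣ} {x : Fin n → ℤ} {f : Fin n → A} (hf : Compatible ε x f) :
    Monotone f :=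
  monotone_iff_forall_lt.mpr fun _ _ hij =>
    (signedKey_lt_iff.mp (hf hij)).elim le_of_lt fun h => h.1.le

lemma existsUnique_perm_strictMono_comp {L : Type*} [LinearOrder L] {key : Fin n → L}
    (hkey : Function.Injective key) : ∃! g : Equiv.Perm (Fin n), StrictMono (key ∘ g) := by
  refine ⟨Tuple.sort key,
    (Tuple.monotone_sort key).strictMono_of_injective (hkey.comp (Equiv.injective _)), ?_⟩
  intro g hg
  have hsort := Tuple.unique_monotone hg.monotone (Tuple.monotone_sort key)
  exact Equiv.ext fun i => hkey (congrFun hsort i)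

-- Every word of length `n` has exactly one sorting permutation (its standardization).
lemma sum_compatibleCount_permWord [Fintype A] (ε : A → ℤˣ) :
    ∑ π : Equiv.Perm (Fin n), compatibleCount ε (permWord π) = Fintype.card A ^ n := by
  have count_eq (π : Equiv.Perm (Fin n)) : compatibleCount ε (permWord π) =
      (Finset.univ.filter fun w : Fin n → A =>
        StrictMono ((fun j => signedKey ε (w j) (j : ℤ)) ∘ π)).card := by
    refine (Finset.card_equiv (Equiv.arrowCongr π.symm (Equiv.refl A)) fun w => ?_).symm
    rw [Finset.mem_filter_univ, Finset.mem_filter_univ]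
    rfl
  have unique_sort (w : Fin n → A) : (Finset.univ.filter fun π : Equiv.Perm (Fin n) =>
      StrictMono ((fun j => signedKey ε (w j) (j : ℤ)) ∘ π)).card = 1 := by
    refine Finset.card_eq_one_iff_existsUnique.mpr ?_
    simpa using existsUnique_perm_strictMono_comp (key := fun j => signedKey ε (w j) (j : ℤ))
      fun i j hij => by simpa [Fin.ext_iff] using (signedKey_inj.mp hij).2
  calc ∑ π : Equiv.Perm (Fin n), compatibleCount ε (permWord π)
      = ∑ w : Fin n → A, 1 := by
        rw [Finset.sum_congr rfl fun π _ => count_eq π]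
        exact (Finset.sum_card_bipartiteAbove_eq_sum_card_bipartiteBelow _).trans
          (Finset.sum_congr rfl fun w _ => unique_sort w)
    _ = Fintype.card A ^ n := by simp

end Compatible

section Prefix

variable {n v : ℕ}

/-- The word `q 1, …, q n`; the place `q 0` in front of it only serves to compare `q 1` with. -/
def prefixWord (q : ℕ → ℤ) (n : ℕ) : Fin n → ℤ := fun i => q (i + 1)

lemma compatible_snoc_iff {ε : Fin v → ℤˣ} {q : ℕ → ℤ} {g : Fin n → Fin v} {a : Fin v} :
    Compatible ε (prefixWord q (n + 1)) (Fin.snoc (α := fun _ => Fin v) g a) ↔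
      Compatible ε (prefixWord q n) g ∧
        ∀ i, signedKey ε (g i) (prefixWord q n i) < signedKey ε a (q (n + 1)) := by
  constructor
  · intro h
    refine ⟨fun i j hij => ?_, fun i => ?_⟩
    · simpa [prefixWord] using h (Fin.castSucc_lt_castSucc_iff.mpr hij)
    · simpa [prefixWord] using h (Fin.castSucc_lt_last i)
  · rintro ⟨hg, hlast⟩ i j hij
    obtain ⟨i, rfl⟩ := Fin.exists_castSucc_eq.mpr (hij.trans_le (Fin.le_last j)).ne
    induction j using Fin.lastCases with
    | last => simpa [prefixWord] using hlast i
    | cast j => simpa [prefixWord] using hg (Fin.castSucc_lt_castSucc_iff.mp hij)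

lemma card_compatible_ne_last (ε : Fin (v + 1) → ℤˣ) (x : Fin n → ℤ) :
    (Finset.univ.filter fun f : Fin n → Fin (v + 1) =>
      Compatible ε x f ∧ ∀ i, f i ≠ Fin.last v).card =
      compatibleCount (ε ∘ Fin.castSucc) x := by
  have castSucc_key (g : Fin n → Fin v) :
      Compatible ε x (Fin.castSucc ∘ g) ↔ Compatible (ε ∘ Fin.castSucc) x g := by
    simp only [Compatible, StrictMono, signedKey_lt_iff, Function.comp_apply,
      Fin.castSucc_lt_castSucc_iff, Fin.castSucc_inj]
  refine (Finset.card_nbij (Fin.castSucc ∘ ·) ?_ ?_ ?_).symm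
  · intro g hg
    rw [Finset.mem_coe, Finset.mem_filter_univ] at hg ⊢
    exact ⟨(castSucc_key g).mpr hg, fun i => (Fin.castSucc_lt_last (g i)).ne⟩
  · exact ((Fin.castSucc_injective v).comp_left).injOn
  · intro f hf
    rw [Finset.mem_coe, Finset.mem_filter_univ] at hf
    choose g hg using fun i => Fin.exists_castSucc_eq.mpr (hf.2 i)
    obtain rfl : Fin.castSucc ∘ g = f := funext hg
    exact ⟨g, by simpa using (castSucc_key g).mp hf.1, rfl⟩

-- The words ending in the largest letter are counted by deleting that letter.
lemma compatibleCount_prefixWord_succ (ε : Fin (v + 1) → ℤˣ) (q : ℕ → ℤ) :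
    compatibleCount ε (prefixWord q (n + 1)) =
      compatibleCount (ε ∘ Fin.castSucc) (prefixWord q (n + 1)) +
        (Finset.univ.filter fun g : Fin n → Fin (v + 1) => Compatible ε (prefixWord q n) g ∧
          ∀ i, signedKey ε (g i) (prefixWord q n i) <
            signedKey ε (Fin.last v) (q (n + 1))).card := by
  have ne_last_iff {f : Fin (n + 1) → Fin (v + 1)} (hf : Compatible ε (prefixWord q (n + 1)) f) :
      f (Fin.last n) ≠ Fin.last v ↔ ∀ i, f i ≠ Fin.last v := by
    refine ⟨fun h i hi => h ?_, fun h => h _⟩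
    exact le_antisymm (Fin.le_last _) (hi ▸ hf.monotone (Fin.le_last i))
  rw [← card_compatible_ne_last, compatibleCount,
    ← Finset.card_filter_add_card_filter_not fun f => f (Fin.last n) ≠ Fin.last v,
    Finset.filter_filter, Finset.filter_filter]
  congr 1
  · exact congrArg _ (Finset.filter_congr fun f _ => and_congr_right ne_last_iff)
  refine (Finset.card_nbij (fun g => Fin.snoc (α := fun _ => Fin (v + 1)) g (Fin.last v))
    ?_ ?_ ?_).symm
  · intro g hg
    rw [Finset.mem_coe, Finset.mem_filter_univ] at hg ⊢
    exact ⟨compatible_snoc_iff.mpr hg, by simp⟩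
  · intro g _ h _ hgh
    exact (Fin.snoc_inj.mp hgh).1
  · intro f hf
    rw [Finset.mem_coe, Finset.mem_filter_univ, not_not] at hf
    have snoc_init : Fin.snoc (α := fun _ => Fin (v + 1)) (Fin.init f) (Fin.last v) = f := by
      rw [← hf.2, Fin.snoc_init_self]
    refine ⟨Fin.init f, ?_, snoc_init⟩
    rw [Finset.mem_coe, Finset.mem_filter_univ, ← compatible_snoc_iff, snoc_init]
    exact hf.1

lemma forall_signedKey_lt_of_lt {ε : Fin (v + 1) → ℤˣ} {q : ℕ → ℤ} {g : Fin n → Fin (v + 1)}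
    (hg : Compatible ε (prefixWord q n) g)
    (hq : (ε (Fin.last v) : ℤ) * q n < ε (Fin.last v) * q (n + 1)) (i : Fin n) :
    signedKey ε (g i) (prefixWord q n i) < signedKey ε (Fin.last v) (q (n + 1)) := by
  obtain ⟨n, rfl⟩ := Nat.exists_eq_add_one.mpr i.pos
  refine ((StrictMono.monotone hg) (Fin.le_last i)).trans_lt (signedKey_lt_iff.mpr ?_)
  exact (Fin.le_last (g (Fin.last n))).lt_or_eq.imp_right fun h => ⟨h, by rw [h]; exact hq⟩

lemma forall_signedKey_lt_iff_of_not_lt {ε : Fin (v + 1) → ℤˣ} {q : ℕ → ℤ}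
    {g : Fin n → Fin (v + 1)} (hg : Compatible ε (prefixWord q n) g)
    (hq : ¬(ε (Fin.last v) : ℤ) * q n < ε (Fin.last v) * q (n + 1)) :
    (∀ i, signedKey ε (g i) (prefixWord q n i) < signedKey ε (Fin.last v) (q (n + 1))) ↔
      ∀ i, g i ≠ Fin.last v := by
  refine ⟨fun hlt i hi => hq ?_, fun hne i =>
    signedKey_lt_iff.mpr (.inl (Fin.lt_last_iff_ne_last.mpr (hne i)))⟩
  obtain ⟨n, rfl⟩ := Nat.exists_eq_add_one.mpr i.pos
  have last_eq : g (Fin.last n) = Fin.last v :=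
    le_antisymm (Fin.le_last _) (hi ▸ hg.monotone (Fin.le_last i))
  simpa [signedKey_lt_iff, last_eq, prefixWord] using hlt (Fin.last n)

end Prefix

section AlternatingCount

/-- The signs `+, -, +, …` on the alphabet `Fin v`. -/
def alternatingSign (v : ℕ) : Fin v → ℤˣ := fun a => (-1) ^ (a : ℕ)

/-- The number of words over the first `v` letters of the alphabet with signs `+, -, +, …` that are
compatible with `q 1, …, q n`. -/
def alternatingCount (q : ℕ → ℤ) (n v : ℕ) : ℕ :=
  compatibleCount (alternatingSign v) (prefixWord q n)

variable {n : ℕ} (v : ℕ) {q : ℕ → ℤ}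

lemma alternatingCount_zero_left : alternatingCount q 0 v = 1 := by
  simp [alternatingCount, compatibleCount, Compatible, Subsingleton.strictMono]

lemma alternatingCount_zero_right : alternatingCount q (n + 1) 0 = 0 := by
  simp [alternatingCount, compatibleCount]

lemma alternatingCount_succ_of_lt (hq : (-1) ^ v * q n < (-1) ^ v * q (n + 1)) :
    alternatingCount q (n + 1) (v + 1) =
      alternatingCount q (n + 1) v + alternatingCount q n (v + 1) := by
  refine (compatibleCount_prefixWord_succ _ q).trans (congrArg₂ _ rfl ?_)
  rw [alternatingCount, compatibleCount]
  refine congrArg _ (Finset.filter_congr fun g _ => and_iff_left_of_imp fun hg =>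
    forall_signedKey_lt_of_lt hg ?_)
  simpa [alternatingSign] using hq

lemma alternatingCount_succ_of_not_lt (hq : ¬(-1) ^ v * q n < (-1) ^ v * q (n + 1)) :
    alternatingCount q (n + 1) (v + 1) =
      alternatingCount q (n + 1) v + alternatingCount q n v := by
  refine (compatibleCount_prefixWord_succ _ q).trans (congrArg₂ _ rfl ?_)
  refine Eq.trans ?_ (card_compatible_ne_last (alternatingSign (v + 1)) (prefixWord q n))
  refine congrArg _ (Finset.filter_congr fun g _ => and_congr_right fun hg =>
    forall_signedKey_lt_iff_of_not_lt hg ?_)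
  simpa [alternatingSign] using hq

end AlternatingCount

section GeneratingFunction

open PowerSeries

/-- The generating function of the number of compatible words over the first `2k + 1` letters, the
last of them positive. -/
def oddSeries (q : ℕ → ℤ) (n : ℕ) : ℚ⟦X⟧ := mk fun k => (alternatingCount q n (2 * k + 1) : ℚ)

/-- The generating function of the number of compatible words over the first `2k` letters, the last
of them negative. -/
def evenSeries (q : ℕ → ℤ) (n : ℕ) : ℚ⟦X⟧ := mk fun k => (alternatingCount q n (2 * k) : ℚ)

variable {q : ℕ → ℤ} {n : ℕ}

lemma one_sub_X_mul_oddSeries_zero : (1 - X) * oddSeries q 0 = 1 := by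
  have oddSeries_zero : oddSeries q 0 = mk 1 := by
    ext k
    simp [oddSeries, alternatingCount_zero_left]
  rw [oddSeries_zero, mul_comm, mk_one_mul_one_sub_eq_one]

lemma coeff_zero_evenSeries_succ : coeff 0 (evenSeries q (n + 1)) = 0 := by
  simp [evenSeries, alternatingCount_zero_right]

lemma oddSeries_succ_of_lt (hq : q n < q (n + 1)) :
    oddSeries q (n + 1) = evenSeries q (n + 1) + oddSeries q n := by
  ext k
  rw [map_add]
  simp only [oddSeries, evenSeries, coeff_mk]
  exact_mod_cast alternatingCount_succ_of_lt (2 * k) (by simpa using hq)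

lemma oddSeries_succ_of_gt (hq : q (n + 1) < q n) :
    oddSeries q (n + 1) = evenSeries q (n + 1) + evenSeries q n := by
  ext k
  rw [map_add]
  simp only [oddSeries, evenSeries, coeff_mk]
  exact_mod_cast alternatingCount_succ_of_not_lt (2 * k) (by simpa using hq.le)

lemma evenSeries_succ_of_lt (hq : q n < q (n + 1)) :
    evenSeries q (n + 1) = X * oddSeries q (n + 1) + X * oddSeries q n := by
  ext k
  rw [← mul_add]
  cases k with
  | zero => rw [coeff_zero_evenSeries_succ, coeff_zero_X_mul]
  | succ k =>
    rw [coeff_succ_X_mul, map_add]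
    simp only [oddSeries, evenSeries, coeff_mk, mul_add_one]
    exact_mod_cast alternatingCount_succ_of_not_lt (2 * k + 1) (by simpa [pow_succ] using hq.le)

lemma evenSeries_succ_of_gt (hq : q (n + 2) < q (n + 1)) :
    evenSeries q (n + 2) = X * oddSeries q (n + 2) + evenSeries q (n + 1) := by
  ext k
  rw [map_add]
  cases k with
  | zero => rw [coeff_zero_evenSeries_succ, coeff_zero_evenSeries_succ, coeff_zero_X_mul, add_zero]
  | succ k =>
    rw [coeff_succ_X_mul]
    simp only [oddSeries, evenSeries, coeff_mk, mul_add_one]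
    exact_mod_cast alternatingCount_succ_of_lt (2 * k + 1) (by simpa [pow_succ] using hq)

lemma one_sub_X_mul_oddSeries_succ_of_lt (hq : q n < q (n + 1)) :
    (1 - X) * oddSeries q (n + 1) = (1 + X) * oddSeries q n := by
  linear_combination oddSeries_succ_of_lt hq + evenSeries_succ_of_lt hq

lemma one_sub_X_mul_oddSeries_succ_of_gt (hq : q (n + 2) < q (n + 1)) :
    (1 - X) * oddSeries q (n + 2) = 2 * evenSeries q (n + 1) := by
  linear_combination oddSeries_succ_of_gt hq + evenSeries_succ_of_gt hq

lemma one_add_X_mul_evenSeries_succ_of_lt (hq : q n < q (n + 1)) :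
    (1 + X) * evenSeries q (n + 1) = 2 * X * oddSeries q (n + 1) := by
  linear_combination evenSeries_succ_of_lt hq - X * oddSeries_succ_of_lt hq

lemma one_add_X_mul_oddSeries_succ_of_gt (hq : q (n + 2) < q (n + 1)) :
    (1 + X) * oddSeries q (n + 2) = 2 * evenSeries q (n + 2) := by
  linear_combination oddSeries_succ_of_gt hq - evenSeries_succ_of_gt hq

/-- The series `4X / (1 + X)²`, the contribution of one left peak to the generating function of the
compatible words. -/
def peakSeries : ℚ⟦X⟧ := 4 * X * (1 + X)⁻¹ ^ 2

lemma one_add_X_ne_zero : (1 + X : ℚ⟦X⟧) ≠ 0 := fun h => by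
  simpa using congrArg constantCoeff h

lemma constantCoeff_peakSeries : constantCoeff peakSeries = 0 := by
  simp [peakSeries]

lemma peakSeries_mul_one_add_X_sq : peakSeries * (1 + X) ^ 2 = 4 * X := by
  have one_add_X_inv : ((1 + X)⁻¹ : ℚ⟦X⟧) * (1 + X) = 1 := PowerSeries.inv_mul_cancel _ (by simp)
  rw [peakSeries, mul_assoc, ← mul_pow, one_add_X_inv, one_pow, mul_one]

lemma peakSeries_ne_zero : peakSeries ≠ 0 := by
  refine left_ne_zero_of_mul (b := (1 + X) ^ 2) ?_
  rw [peakSeries_mul_one_add_X_sq]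
  exact mul_ne_zero (fun h => by simpa [map_ofNat] using congrArg constantCoeff h) X_ne_zero

lemma one_sub_X_mul_oddSeries_succ_of_lt_of_gt (hq : q n < q (n + 1))
    (hq' : q (n + 2) < q (n + 1)) :
    (1 - X) * oddSeries q (n + 2) = (1 + X) * oddSeries q (n + 1) * peakSeries := by
  refine mul_left_cancel₀ one_add_X_ne_zero ?_
  linear_combination (1 + X) * one_sub_X_mul_oddSeries_succ_of_gt hq'
    + 2 * one_add_X_mul_evenSeries_succ_of_lt hq
    - oddSeries q (n + 1) * peakSeries_mul_one_add_X_sq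

/-- The number of left peaks of `q 1, …, q n`, where `q 0` is the place in front of the word. -/
def leftPeakCount (q : ℕ → ℤ) (n : ℕ) : ℕ :=
  ((Finset.Icc 1 (n - 1)).filter fun i => q (i - 1) < q i ∧ q (i + 1) < q i).card

lemma leftPeakCount_add_two : leftPeakCount q (n + 2) =
    leftPeakCount q (n + 1) + if q n < q (n + 1) ∧ q (n + 2) < q (n + 1) then 1 else 0 := by
  rw [leftPeakCount, show n + 2 - 1 = n + 1 from rfl,
    ← Finset.insert_Icc_right_eq_Icc_add_one (by omega), Finset.filter_insert]
  change (if q n < q (n + 1) ∧ q (n + 2) < q (n + 1) then _ else _ : Finset ℕ).card = _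
  split_ifs
  · rw [Finset.card_insert_of_notMem (by simp)]
    rfl
  · rfl

lemma one_sub_X_pow_mul_oddSeries (hq₀ : 0 < n → q 0 < q 1) (hq : ∀ i < n, q i ≠ q (i + 1)) :
    (1 - X) ^ (n + 1) * oddSeries q n = (1 + X) ^ n * peakSeries ^ leftPeakCount q n := by
  induction n with
  | zero => simpa [leftPeakCount] using one_sub_X_mul_oddSeries_zero
  | succ n ih =>
    specialize hq₀ n.succ_pos
    specialize ih (fun _ => hq₀) fun i hi => hq i (hi.trans n.lt_succ_self)
    suffices step : (1 - X) * oddSeries q (n + 1) * peakSeries ^ leftPeakCount q n =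
        (1 + X) * oddSeries q n * peakSeries ^ leftPeakCount q (n + 1) by
      refine mul_left_cancel₀ (pow_ne_zero (leftPeakCount q n) peakSeries_ne_zero) ?_
      linear_combination (1 - X) ^ (n + 1) * step
        + (1 + X) * peakSeries ^ leftPeakCount q (n + 1) * ih
    obtain _ | n := n
    · rw [one_sub_X_mul_oddSeries_succ_of_lt hq₀]
      rfl
    rw [leftPeakCount_add_two]
    obtain up | down := (hq (n + 1) (by omega)).lt_or_gt
    · rw [if_neg (fun h => h.2.not_gt up), one_sub_X_mul_oddSeries_succ_of_lt up, add_zero]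
    obtain up' | down' := (hq n (by omega)).lt_or_gt
    · rw [if_pos ⟨up', down⟩, one_sub_X_mul_oddSeries_succ_of_lt_of_gt up' down]
      ring
    · obtain _ | n := n
      · exact absurd hq₀ down'.not_gt
      rw [if_neg (fun h => h.1.not_gt down'), one_sub_X_mul_oddSeries_succ_of_gt down,
        one_add_X_mul_oddSeries_succ_of_gt down', add_zero]

end GeneratingFunction

section LeftPeaks

open PowerSeries

variable {n : ℕ} (π : Equiv.Perm (Fin n))

/-- The one-line notation `0, π(1), …, π(n), 0, …`, shifted by one so that it extends the letters of
`permWord π`. -/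
def extendedWord (i : ℕ) : ℤ := (oneLine n π i : ℤ) - 1

lemma extendedWord_zero : extendedWord π 0 = -1 := by
  simp [extendedWord, oneLine]

lemma extendedWord_succ (i : Fin n) : extendedWord π (i + 1) = permWord π i := by
  simp [extendedWord, oneLine, permWord]

lemma extendedWord_zero_lt_succ (i : Fin n) : extendedWord π 0 < extendedWord π (i + 1) := by
  rw [extendedWord_zero, extendedWord_succ, permWord]
  omega

lemma extendedWord_ne_succ (i : Fin n) : extendedWord π i ≠ extendedWord π (i + 1) := by
  obtain ⟨_ | i, hi⟩ := i
  · exact (extendedWord_zero_lt_succ π ⟨0, hi⟩).ne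
  · rw [extendedWord_succ π ⟨i, by omega⟩, extendedWord_succ π ⟨i + 1, hi⟩]
    exact (permWord_injective π).ne (by simp)

lemma leftPeakCount_extendedWord : leftPeakCount (extendedWord π) n = lpk n π := by
  simp [leftPeakCount, lpk, extendedWord]

/-- The generating function of the number of words over the first `2k + 1` letters of the alphabet
with signs `+, -, +, …` that are compatible with `π`, i.e. of the enriched `π`-partitions. -/
def enrichedSeries : ℚ⟦X⟧ :=
  mk fun k => (compatibleCount (alternatingSign (2 * k + 1)) (permWord π) : ℚ)

lemma one_sub_X_pow_mul_enrichedSeries :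
    (1 - X) ^ (n + 1) * enrichedSeries π = (1 + X) ^ n * peakSeries ^ lpk n π := by
  have oddSeries_extendedWord : oddSeries (extendedWord π) n = enrichedSeries π := by
    rw [enrichedSeries, ← show prefixWord (extendedWord π) n = permWord π from
      funext (extendedWord_succ π)]
    rfl
  rw [← leftPeakCount_extendedWord, ← oddSeries_extendedWord]
  exact one_sub_X_pow_mul_oddSeries (fun hn => extendedWord_zero_lt_succ π ⟨0, hn⟩)
    fun i hi => extendedWord_ne_succ π ⟨i, hi⟩

end LeftPeaks

section Biword

variable {K n : ℕ} {ε : Fin K → ℤˣ} {b : Fin n → Fin K × Fin K} {τ : Equiv.Perm (Fin n)}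

/-- The key by which the columns `(a, c)` of a biword over the signed alphabet `(Fin K, ε)` are
sorted: by `a` first, then by `c`, upwards or downwards according to the sign of `a`. -/
def biletterKey (ε : Fin K → ℤˣ) (b : Fin K × Fin K) : Fin K ×ₗ ℤ :=
  signedKey ε b.1 (b.2 : ℤ)

/-- The biword `b` uses each biletter whose two letters have opposite signs at most once. -/
def MixedInjective {α A : Type*} (ε : A → ℤˣ) (b : α → A × A) : Prop :=
  ∀ ⦃i j⦄, b i = b j → ε (b i).1 ≠ ε (b i).2 → i = j

/-- The biword `b` standardizes to `τ`: its top row is compatible with `τ`, and its bottom row, read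
in the order given by `τ⁻¹`, is compatible with `τ⁻¹`. -/
structure Standardizes (ε : Fin K → ℤˣ) (b : Fin n → Fin K × Fin K) (τ : Equiv.Perm (Fin n)) :
    Prop where
  fst : Compatible ε (permWord τ) (Prod.fst ∘ b)
  snd : Compatible ε (permWord τ⁻¹) (Prod.snd ∘ b ∘ ⇑τ⁻¹)

lemma biletterKey_injective (ε : Fin K → ℤˣ) : Function.Injective (biletterKey ε) :=
  fun _ _ h => Prod.ext (signedKey_inj.mp h).1
    (Fin.ext (Nat.cast_injective (signedKey_inj.mp h).2))

lemma Standardizes.symm (h : Standardizes ε b τ) : Standardizes ε (Prod.swap ∘ b ∘ ⇑τ⁻¹) τ⁻¹ where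
  fst := h.snd
  snd := by
    convert h.fst using 1
    · rw [inv_inv]
    · funext i
      simp

lemma units_mul_lt_mul_iff {u : ℤˣ} {x y : ℤ} :
    (u : ℤ) * x < u * y ↔ u = 1 ∧ x < y ∨ u = -1 ∧ y < x := by
  obtain rfl | rfl := Int.units_eq_one_or u <;> simp

-- For equal top letters, going down one row multiplies the direction of the tie-break by its sign.
lemma signedKey_fst_lt_iff (hsnd : Compatible ε (permWord τ⁻¹) (Prod.snd ∘ b ∘ ⇑τ⁻¹)) {i j : Fin n}
    (hij : i < j) :
    signedKey ε (b i).1 (τ i : ℤ) < signedKey ε (b j).1 (τ j : ℤ) ↔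
      biletterKey ε (b i) < biletterKey ε (b j) ∨ b i = b j ∧ ε (b i).1 = ε (b i).2 := by
  have place_lt (i j : Fin n) :
      τ i < τ j ↔ signedKey ε (b i).2 (i : ℤ) < signedKey ε (b j).2 (j : ℤ) := by
    rw [← StrictMono.lt_iff_lt hsnd]
    simp [permWord]
  simp only [biletterKey, signedKey_lt_iff, Prod.ext_iff, units_mul_lt_mul_iff, Nat.cast_lt,
    Fin.val_fin_lt, place_lt]
  obtain hε | hε := Int.units_eq_one_or (ε (b i).1) <;>
    obtain hε' | hε' := Int.units_eq_one_or (ε (b i).2) <;> grind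

lemma standardizes_iff : Standardizes ε b τ ↔
    Compatible ε (permWord τ⁻¹) (Prod.snd ∘ b ∘ ⇑τ⁻¹) ∧
      Monotone (biletterKey ε ∘ b) ∧ MixedInjective ε b := by
  constructor
  · rintro ⟨hfst, hsnd⟩
    have related {i j} (hij : i < j) := (signedKey_fst_lt_iff hsnd hij).mp (hfst hij)
    have mixed_ne {i j} (hij : i < j) (hb : b i = b j) : ε (b i).1 = ε (b i).2 := by
      simpa [hb] using related hij
    refine ⟨hsnd, monotone_iff_forall_lt.mpr fun i j hij => ?_, fun i j hb hne => ?_⟩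
    · exact (related hij).elim le_of_lt fun h => (congrArg _ h.1).le
    · by_contra hij
      obtain hij | hij := lt_or_gt_of_ne hij
      · exact hne (mixed_ne hij hb)
      · exact hne (hb ▸ mixed_ne hij hb.symm)
  · rintro ⟨hsnd, hmono, hmixed⟩
    refine ⟨fun i j hij => (signedKey_fst_lt_iff hsnd hij).mpr ?_, hsnd⟩
    refine (hmono hij.le).lt_or_eq.imp_right fun h => ?_
    have hb := biletterKey_injective ε h
    exact ⟨hb, not_imp_comm.mp (hmixed hb) hij.ne⟩

lemma existsUnique_standardizes (hmono : Monotone (biletterKey ε ∘ b))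
    (hmixed : MixedInjective ε b) : ∃! τ, Standardizes ε b τ := by
  have key_injective : Function.Injective fun i => signedKey ε (b i).2 (i : ℤ) :=
    fun i j hij => Fin.ext (Nat.cast_injective (signedKey_inj.mp hij).2)
  obtain ⟨σ, hσ, σ_unique⟩ := existsUnique_perm_strictMono_comp key_injective
  refine ⟨σ⁻¹, standardizes_iff.mpr ⟨by rwa [inv_inv], hmono, hmixed⟩, fun τ hτ => ?_⟩
  exact inv_eq_iff_eq_inv.mp (σ_unique _ hτ.snd)

lemma Standardizes.involutive {π : Equiv.Perm (Fin n)} (hτ : Standardizes ε b τ)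
    (hπ : b ∘ π = Prod.swap ∘ b) : τ ^ 2 = 1 ∧ b ∘ τ = Prod.swap ∘ b := by
  obtain ⟨-, hmono, hmixed⟩ := standardizes_iff.mp hτ
  have swap_comp : Prod.swap ∘ b ∘ ⇑τ⁻¹ = b ∘ (π * τ⁻¹ : Equiv.Perm (Fin n)) := by
    rw [Equiv.Perm.coe_mul, ← Function.comp_assoc, ← hπ, Function.comp_assoc]
  have swap_eq : Prod.swap ∘ b ∘ ⇑τ⁻¹ = b := by
    have hmono' := (standardizes_iff.mp hτ.symm).2.1
    rw [swap_comp] at hmono' ⊢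
    refine (biletterKey_injective ε).comp_left ?_
    exact Tuple.unique_monotone (f := biletterKey ε ∘ b) (σ := π * τ⁻¹) (τ := 1) hmono' hmono
  have inv_eq : τ⁻¹ = τ :=
    (existsUnique_standardizes hmono hmixed).unique (swap_eq ▸ hτ.symm) hτ
  refine ⟨by rw [pow_two, ← inv_eq_iff_mul_eq_one, inv_eq], ?_⟩
  funext i
  simpa using (congrFun swap_eq (τ i)).symm

lemma standardizes_of_compatible {f : Fin n → Fin K} (hτ : τ ^ 2 = 1)
    (hf : Compatible ε (permWord τ) f) : Standardizes ε (fun i => (f i, f (τ i))) τ where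
  fst := hf
  snd := by
    have inv_eq : τ⁻¹ = τ := inv_eq_of_mul_eq_one_left (by rw [← pow_two, hτ])
    convert hf using 1
    · rw [inv_eq]
    · funext i
      simp

/-- The biwords that can be rearranged into a biword standardized by an involution: those with as
many columns `(a, c)` as columns `(c, a)`, and without repeated mixed columns. -/
def IsGood (ε : Fin K → ℤˣ) (b : Fin n → Fin K × Fin K) : Prop :=
  MixedInjective ε b ∧ ∃ π : Equiv.Perm (Fin n), b ∘ π = Prod.swap ∘ b

lemma sum_invSet_compatibleCount (ε : Fin K → ℤˣ) :
    ∑ τ ∈ invSet n, compatibleCount ε (permWord τ) =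
      (Finset.univ.filter fun b : Fin n → Fin K × Fin K =>
        IsGood ε b ∧ Monotone (biletterKey ε ∘ b)).card := by
  simp only [compatibleCount]
  rw [← Finset.card_sigma]
  refine Finset.card_nbij (fun p i => (p.2 i, p.2 (p.1 i))) ?_ ?_ ?_
  · rintro ⟨τ, f⟩ hp
    rw [Finset.mem_coe, Finset.mem_sigma, invSet, Finset.mem_filter_univ,
      Finset.mem_filter_univ] at hp
    obtain ⟨-, hmono, hmixed⟩ := standardizes_iff.mp (standardizes_of_compatible hp.1 hp.2)
    rw [Finset.mem_coe, Finset.mem_filter_univ]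
    have τ_τ (i : Fin n) : τ (τ i) = i := by rw [← Equiv.Perm.mul_apply, ← pow_two, hp.1]; rfl
    exact ⟨⟨hmixed, τ, funext fun i => by simp [τ_τ]⟩, hmono⟩
  · rintro ⟨τ, f⟩ hp ⟨τ', f'⟩ hp' hb
    rw [Finset.mem_coe, Finset.mem_sigma, invSet, Finset.mem_filter_univ,
      Finset.mem_filter_univ] at hp hp'
    have hτ := standardizes_of_compatible hp.1 hp.2
    have hτ' := standardizes_of_compatible hp'.1 hp'.2
    obtain ⟨-, hmono, hmixed⟩ := standardizes_iff.mp hτ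
    obtain rfl : f = f' := funext fun i => congrArg Prod.fst (congrFun hb i)
    replace hb : (fun i => (f i, f (τ i))) = fun i => (f i, f (τ' i)) := hb
    obtain rfl := (existsUnique_standardizes hmono hmixed).unique hτ (hb ▸ hτ')
    rfl
  · intro b hb
    rw [Finset.mem_coe, Finset.mem_filter_univ] at hb
    obtain ⟨⟨hmixed, π, hπ⟩, hmono⟩ := hb
    obtain ⟨τ, hτ, -⟩ := existsUnique_standardizes hmono hmixed
    obtain ⟨τ_sq, comp_τ⟩ := hτ.involutive hπ
    refine ⟨⟨τ, Prod.fst ∘ b⟩, ?_, funext fun i => Prod.ext rfl ?_⟩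
    · rw [Finset.mem_coe, Finset.mem_sigma, invSet, Finset.mem_filter_univ,
        Finset.mem_filter_univ]
      exact ⟨τ_sq, hτ.fst⟩
    · exact congrArg Prod.fst (congrFun comp_τ i)

lemma MixedInjective.comp_perm (h : MixedInjective ε b) (σ : Equiv.Perm (Fin n)) :
    MixedInjective ε (b ∘ σ) :=
  fun _ _ hb hne => σ.injective (h hb hne)

lemma isGood_comp_perm_iff (σ : Equiv.Perm (Fin n)) : IsGood ε (b ∘ σ) ↔ IsGood ε b := by
  have comp_perm {b : Fin n → Fin K × Fin K} (h : IsGood ε b) (σ : Equiv.Perm (Fin n)) :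
      IsGood ε (b ∘ σ) := by
    obtain ⟨hmixed, π, hπ⟩ := h
    refine ⟨hmixed.comp_perm σ, σ⁻¹ * π * σ, ?_⟩
    rw [← Function.comp_assoc, ← hπ]
    funext i
    simp
  refine ⟨fun h => ?_, fun h => comp_perm h σ⟩
  simpa [Function.comp_assoc] using comp_perm h σ⁻¹

/-- The permutations of the columns that exchange the two rows of the biword `b`. -/
def rowSwaps {α A : Type*} [Fintype α] [DecidableEq α] [DecidableEq A] (b : α → A × A) :
    Finset (Equiv.Perm α) :=
  Finset.univ.filter fun π => b ∘ π = Prod.swap ∘ b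

lemma mem_rowSwaps {α A : Type*} [Fintype α] [DecidableEq α] [DecidableEq A] {b : α → A × A}
    {π : Equiv.Perm α} : π ∈ rowSwaps b ↔ b ∘ π = Prod.swap ∘ b :=
  Finset.mem_filter_univ π

lemma card_perm_comp_eq_comp {α B : Type*} [Fintype α] [DecidableEq α] [DecidableEq B]
    (b : α → B) (π : Equiv.Perm α) :
    (Finset.univ.filter fun σ : Equiv.Perm α => b ∘ σ = b ∘ π).card =
      (Finset.univ.filter fun σ : Equiv.Perm α => b ∘ σ = b).card := by
  refine Finset.card_equiv (Equiv.mulRight π⁻¹) fun σ => ?_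
  rw [Finset.mem_filter_univ, Finset.mem_filter_univ, Equiv.coe_mulRight, Equiv.Perm.coe_mul,
    ← Function.comp_assoc]
  exact (π.comp_symm_eq b (b ∘ σ)).symm

lemma card_rowSwaps (hb : IsGood ε b) :
    (rowSwaps b).card =
      (Finset.univ.filter fun σ : Equiv.Perm (Fin n) =>
        Monotone (biletterKey ε ∘ b ∘ σ)).card := by
  obtain ⟨-, π, hπ⟩ := hb
  set sorting := Tuple.sort (biletterKey ε ∘ b)
  have monotone_iff (σ : Equiv.Perm (Fin n)) :
      Monotone (biletterKey ε ∘ b ∘ σ) ↔ b ∘ σ = b ∘ sorting := by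
    refine ⟨fun h => (biletterKey_injective ε).comp_left ?_, fun h => ?_⟩
    · exact Tuple.unique_monotone (f := biletterKey ε ∘ b) h (Tuple.monotone_sort _)
    · rw [h]
      exact Tuple.monotone_sort (biletterKey ε ∘ b)
  rw [rowSwaps, ← hπ, card_perm_comp_eq_comp]
  simp only [monotone_iff, card_perm_comp_eq_comp]

-- Each symmetric biword is sorted by as many permutations as exchange its rows.
lemma sum_isGood_card_rowSwaps (ε : Fin K → ℤˣ) :
    ∑ b : Fin n → Fin K × Fin K with IsGood ε b, (rowSwaps b).card =
      n.factorial * ∑ τ ∈ invSet n, compatibleCount ε (permWord τ) := by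
  have card_sorted_by (σ : Equiv.Perm (Fin n)) :
      (Finset.univ.filter fun b : Fin n → Fin K × Fin K =>
        IsGood ε b ∧ Monotone (biletterKey ε ∘ b ∘ σ)).card =
        ∑ τ ∈ invSet n, compatibleCount ε (permWord τ) := by
    rw [sum_invSet_compatibleCount]
    refine Finset.card_equiv (Equiv.arrowCongr σ.symm (Equiv.refl _)) fun b => ?_
    rw [Finset.mem_filter_univ, Finset.mem_filter_univ, ← isGood_comp_perm_iff σ]
    rfl
  calc _ = ∑ b : Fin n → Fin K × Fin K with IsGood ε b,
        (Finset.univ.filter fun σ : Equiv.Perm (Fin n) =>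
          Monotone (biletterKey ε ∘ b ∘ σ)).card :=
        Finset.sum_congr rfl fun b hb =>
          card_rowSwaps (Finset.mem_filter_univ b |>.mp hb)
    _ = ∑ σ : Equiv.Perm (Fin n), (Finset.univ.filter fun b : Fin n → Fin K × Fin K =>
        IsGood ε b ∧ Monotone (biletterKey ε ∘ b ∘ σ)).card := by
        simp only [← Finset.filter_filter]
        exact Finset.sum_card_bipartiteAbove_eq_sum_card_bipartiteBelow _
    _ = _ := by
        simp only [card_sorted_by, Finset.sum_const, Finset.card_univ, Fintype.card_perm,
          Fintype.card_fin, smul_eq_mul]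

end Biword

section Orbits

variable {α : Type*} (σ : Equiv.Perm α)

/-- The orbits of `σ`, i.e. its cycles including the fixed points. -/
abbrev Orbits : Type _ := Quotient (Equiv.Perm.SameCycle.setoid σ)

variable {σ}

lemma orbit_eq_iff {i j : α} : (⟦i⟧ : Orbits σ) = ⟦j⟧ ↔ σ.SameCycle i j :=
  Quotient.eq

lemma sameCycle_out (i : α) : σ.SameCycle (⟦i⟧ : Orbits σ).out i :=
  orbit_eq_iff.mp (Quotient.out_eq _)

lemma orbit_apply (i : α) : (⟦σ i⟧ : Orbits σ) = ⟦i⟧ :=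
  orbit_eq_iff.mpr (Equiv.Perm.sameCycle_apply_left.mpr (.refl σ i))

/-- The number of elements of an orbit. -/
def orbitSize (q : Orbits σ) : ℕ := Nat.card {i : α // ⟦i⟧ = q}

lemma orbitSize_of_apply_eq {q : Orbits σ} (h : σ q.out = q.out) : orbitSize q = 1 := by
  refine Nat.subtype_card {q.out} fun j => ?_
  rw [Finset.mem_singleton]
  refine ⟨fun hj => hj ▸ q.out_eq, fun hj => ?_⟩
  exact ((orbit_eq_iff.mp (q.out_eq.trans hj.symm)).eq_of_left h).symm

variable [Fintype α] [DecidableEq α]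

lemma orbitSize_of_apply_ne {q : Orbits σ} (h : σ q.out ≠ q.out) :
    orbitSize q = (σ.cycleOf q.out).support.card := by
  refine Nat.subtype_card _ fun j => ?_
  rw [Equiv.Perm.mem_support_cycleOf_iff' h, ← orbit_eq_iff,
    Quotient.out_eq, eq_comm]

lemma prod_orbitSize_of_apply_ne {M : Type*} [CommMonoid M] (h : ℕ → M) :
    ∏ q : Orbits σ with σ q.out ≠ q.out, h (orbitSize q) = (σ.cycleType.map h).prod := by
  rw [Equiv.Perm.cycleType_def, Multiset.map_map]
  refine Finset.prod_nbij (fun q => σ.cycleOf q.out) (fun q hq => ?_) (fun q hq q' hq' heq => ?_)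
    (fun g hg => ?_) (fun q hq => ?_)
  · rw [Finset.mem_filter_univ] at hq
    rwa [Equiv.Perm.cycleOf_mem_cycleFactorsFinset_iff, Equiv.Perm.mem_support]
  · rw [Finset.mem_coe, Finset.mem_filter_univ, ← Equiv.Perm.mem_support] at hq hq'
    rw [← q.out_eq, ← q'.out_eq, orbit_eq_iff]
    exact (Equiv.Perm.sameCycle_iff_cycleOf_eq_of_mem_support hq hq').mpr heq
  · obtain ⟨i, hi⟩ := (Equiv.Perm.mem_cycleFactorsFinset_iff.mp hg).1.nonempty_support
    refine ⟨⟦i⟧, ?_, ?_⟩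
    · rw [Finset.mem_coe, Finset.mem_filter_univ, ← Equiv.Perm.mem_support]
      exact (sameCycle_out i).mem_support_iff.mpr
        (Equiv.Perm.mem_cycleFactorsFinset_support_le hg hi)
    · rw [Equiv.Perm.cycle_is_cycleOf hi hg]
      exact (sameCycle_out i).cycleOf_eq
  · rw [orbitSize_of_apply_ne ((Finset.mem_filter_univ q).mp hq)]
    rfl

lemma card_orbits_of_apply_eq :
    (Finset.univ.filter fun q : Orbits σ => ¬σ q.out ≠ q.out).card =
      Fintype.card α - σ.support.card := by
  rw [← Finset.card_compl]
  refine Finset.card_nbij (fun q => q.out) (fun q hq => ?_) Quotient.out_injective.injOn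
    fun i hi => ?_
  · simpa using hq
  · have hi : σ i = i := by simpa using hi
    have out_eq : (⟦i⟧ : Orbits σ).out = i := ((sameCycle_out i).symm.eq_of_left hi).symm
    exact ⟨⟦i⟧, by simpa [out_eq] using hi, out_eq⟩

lemma prod_orbitSize {M : Type*} [CommMonoid M] (σ : Equiv.Perm α) (h : ℕ → M) :
    ∏ q : Orbits σ, h (orbitSize q) = (σ.partition.parts.map h).prod := by
  rw [Equiv.Perm.parts_partition, Multiset.map_add, Multiset.prod_add, Multiset.map_replicate,
    Multiset.prod_replicate, ← card_orbits_of_apply_eq, ← prod_orbitSize_of_apply_ne,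
    ← Finset.prod_filter_mul_prod_filter_not Finset.univ fun q : Orbits σ => σ q.out ≠ q.out]
  congr 1
  refine Finset.prod_eq_pow_card fun q hq => ?_
  rw [orbitSize_of_apply_eq (not_ne_iff.mp ((Finset.mem_filter_univ q).mp hq))]

lemma sign_eq_prod_orbitSize (σ : Equiv.Perm α) :
    Equiv.Perm.sign σ = ∏ q : Orbits σ, (-1) ^ (orbitSize q + 1) := by
  rw [prod_orbitSize σ fun p => (-1 : ℤˣ) ^ (p + 1), Equiv.Perm.sign_of_cycleType',
    Equiv.Perm.parts_partition]
  simp [pow_succ]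

end Orbits

section SubtypeOrbits

variable {α : Type*} {σ : Equiv.Perm α} {s : Orbits σ → Prop} {hs : ∀ i, s ⟦σ i⟧ ↔ s ⟦i⟧}

/-- An orbit of the restriction of `σ` to a union of orbits, as an orbit of `σ`. -/
def orbitVal (q : Orbits (σ.subtypePerm (p := fun i => s ⟦i⟧) hs)) : Orbits σ :=
  q.map Subtype.val fun _ _ => Equiv.Perm.sameCycle_subtypePerm.mp

lemma orbitVal_injective : Function.Injective (orbitVal (hs := hs)) := by
  rintro ⟨x⟩ ⟨y⟩ hxy
  exact orbit_eq_iff.mpr (Equiv.Perm.sameCycle_subtypePerm.mpr (orbit_eq_iff.mp hxy))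

lemma orbitSize_orbitVal (q : Orbits (σ.subtypePerm (p := fun i => s ⟦i⟧) hs)) :
    orbitSize (orbitVal q) = orbitSize q := by
  obtain ⟨x⟩ := q
  refine (Nat.card_congr (Equiv.ofBijective
    (fun y => ⟨y.1.1, congrArg orbitVal y.2⟩) ⟨fun y y' hy => ?_, fun j => ?_⟩)).symm
  · exact Subtype.ext (Subtype.ext (Subtype.mk.inj hy))
  · have hsj : s ⟦j.1⟧ := by
      rw [j.2]
      exact x.2
    exact ⟨⟨⟨j.1, hsj⟩, orbitVal_injective j.2⟩, rfl⟩

lemma prod_orbitSize_subtypePerm [Fintype α] {M : Type*} [CommMonoid M] (h : ℕ → M) :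
    ∏ q : Orbits (σ.subtypePerm (p := fun i => s ⟦i⟧) hs), h (orbitSize q) =
      ∏ q : Orbits σ with s q, h (orbitSize q) := by
  refine Finset.prod_nbij orbitVal (fun q _ => ?_) orbitVal_injective.injOn (fun q hq => ?_)
    fun q _ => (congrArg h (orbitSize_orbitVal q)).symm
  · obtain ⟨x⟩ := q
    exact (Finset.mem_filter_univ _).mpr x.2
  · obtain ⟨i⟩ := q
    exact ⟨⟦⟨i, (Finset.mem_filter_univ _).mp hq⟩⟧, Finset.mem_coe.mpr (Finset.mem_univ _), rfl⟩

end SubtypeOrbits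

section SignOn

variable {α : Type*} [Fintype α] [DecidableEq α] {P Q : α → Prop} {σ ρ : Equiv.Perm α}

/-- The sign of the restriction of `σ` to the set `P`, and `1` if `P` is not invariant under `σ`. -/
def signOn (P : α → Prop) (σ : Equiv.Perm α) : ℤˣ :=
  if hP : ∀ i, P (σ i) ↔ P i then Equiv.Perm.sign (σ.subtypePerm hP) else 1

lemma signOn_of_invariant (hP : ∀ i, P (σ i) ↔ P i) :
    signOn P σ = Equiv.Perm.sign (σ.subtypePerm hP) :=
  dif_pos hP

lemma signOn_mul (hσ : ∀ i, P (σ i) ↔ P i) (hρ : ∀ i, P (ρ i) ↔ P i) :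
    signOn P (σ * ρ) = signOn P σ * signOn P ρ := by
  rw [signOn_of_invariant hσ, signOn_of_invariant hρ, ← map_mul, Equiv.Perm.subtypePerm_mul]
  exact signOn_of_invariant _

lemma signOn_sq (hσ : ∀ i, P (σ i) ↔ P i) : signOn P (σ ^ 2) = 1 := by
  rw [pow_two, signOn_mul hσ hσ, Int.units_mul_self]

-- `θ` is the extension of the restriction of `σ` to `P` by the identity.
lemma signOn_eq_sign {θ : Equiv.Perm α} (hσ : ∀ i, P (σ i) ↔ P i) (hP : ∀ i, P i → θ i = σ i)
    (hP' : ∀ i, ¬P i → θ i = i) : signOn P σ = Equiv.Perm.sign θ := by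
  have θ_eq : θ = Equiv.Perm.ofSubtype (σ.subtypePerm hσ) := by
    ext i
    by_cases hi : P i
    · rw [Equiv.Perm.ofSubtype_subtypePerm_of_mem hσ hi, hP i hi]
    · rw [Equiv.Perm.ofSubtype_subtypePerm_of_not_mem hσ hi, hP' i hi]
  rw [θ_eq, Equiv.Perm.sign_ofSubtype, signOn_of_invariant hσ]

lemma signOn_swap {x y : α} (hne : x ≠ y) (hx : P x) (hy : P y) :
    signOn P (Equiv.swap x y) = -1 := by
  rw [signOn_eq_sign (θ := Equiv.swap x y) _ (fun _ _ => rfl) (fun i hi => ?_),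
    Equiv.Perm.sign_swap hne] <;> grind

lemma signOn_swap_of_not {x y : α} (hx : ¬P x) (hy : ¬P y) : signOn P (Equiv.swap x y) = 1 := by
  rw [signOn_eq_sign (θ := 1) _ (fun i hi => ?_) fun _ _ => rfl, map_one]
  · grind
  · rw [Equiv.Perm.one_apply, Equiv.swap_apply_of_ne_of_ne] <;> grind

lemma signOn_eq_of_fixed (hP : ∀ i, P (σ i) ↔ P i) (hQP : ∀ i, Q i → P i)
    (hfix : ∀ i, P i → ¬Q i → σ i = i) : signOn P σ = signOn Q σ := by
  have hQ (i : α) : Q (σ i) ↔ Q i := by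
    have σ_σ : σ (σ i) = σ i → σ i = i := fun h => σ.injective h
    grind
  rw [signOn_of_invariant hQ, ← Equiv.Perm.sign_ofSubtype]
  refine signOn_eq_sign hP (fun i hi => ?_) fun i hi =>
    Equiv.Perm.ofSubtype_subtypePerm_of_not_mem hQ fun h => hi (hQP i h)
  by_cases hi' : Q i
  · exact Equiv.Perm.ofSubtype_subtypePerm_of_mem hQ hi'
  · rw [Equiv.Perm.ofSubtype_subtypePerm_of_not_mem hQ hi', hfix i hi hi']

lemma signOn_comp_orbit (s : Orbits σ → Prop) :
    signOn (fun i => s ⟦i⟧) σ = ∏ q : Orbits σ with s q, (-1) ^ (orbitSize q + 1) := by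
  rw [signOn_of_invariant fun i => by rw [orbit_apply], sign_eq_prod_orbitSize]
  exact prod_orbitSize_subtypePerm fun p => (-1) ^ (p + 1)

end SignOn

section ColourSum

variable {α A : Type*} {σ : Equiv.Perm α}

lemma apply_eq_of_sameCycle [Finite α] {c : α → A} (hc : c ∘ σ = c) {i j : α}
    (hij : σ.SameCycle i j) : c i = c j := by
  obtain ⟨m, -, rfl⟩ := hij.exists_pow_eq'
  induction m with
  | zero => rfl
  | succ m ih =>
    rw [pow_succ', Equiv.Perm.mul_apply, ih (Equiv.Perm.sameCycle_pow_right.mpr (.refl σ i))]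
    exact (congrFun hc _).symm

variable [Fintype α] [DecidableEq α]

lemma coe_signOn_comp_orbit (ε : A → ℤˣ) (d : Orbits σ → A) :
    (signOn (fun i => ε (d ⟦i⟧) = -1) σ : ℤ) =
      ∏ q : Orbits σ, (ε (d q) : ℤ) ^ (orbitSize q + 1) := by
  rw [signOn_comp_orbit fun q => ε (d q) = -1, Finset.prod_filter, Units.coe_prod]
  refine Finset.prod_congr rfl fun q _ => ?_
  obtain h | h := Int.units_eq_one_or (ε (d q)) <;> simp [h]

-- A colouring fixed by `σ` is a colouring of the orbits, and the signs multiply over the orbits.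
lemma sum_signOn_eq_prod_parts [Fintype A] [DecidableEq A] (ε : A → ℤˣ) (σ : Equiv.Perm α) :
    ∑ c : α → A with c ∘ σ = c, (signOn (fun i => ε (c i) = -1) σ : ℤ) =
      (σ.partition.parts.map fun p => ∑ a, (ε a : ℤ) ^ (p + 1)).prod := by
  calc _ = ∑ d : Orbits σ → A, (signOn (fun i => ε (d ⟦i⟧) = -1) σ : ℤ) := by
        symm
        refine Finset.sum_nbij (fun d i => d ⟦i⟧) ?_ ?_ ?_ ?_
        · intro d _
          rw [Finset.mem_filter_univ]
          exact funext fun i => congrArg d (orbit_apply i)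
        · intro d _ d' _ h
          exact funext fun q => q.inductionOn fun i => congrFun h i
        · intro c hc
          rw [Finset.mem_coe, Finset.mem_filter_univ] at hc
          exact ⟨Quotient.lift c fun _ _ => apply_eq_of_sameCycle hc,
            Finset.mem_coe.mpr (Finset.mem_univ _), rfl⟩
        · intro d _
          rfl
    _ = ∑ d : Orbits σ → A, ∏ q, (ε (d q) : ℤ) ^ (orbitSize q + 1) := by
        simp only [coe_signOn_comp_orbit]
    _ = ∏ q : Orbits σ, ∑ a, (ε a : ℤ) ^ (orbitSize q + 1) := by
        rw [Finset.prod_univ_sum, Fintype.piFinset_univ]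
    _ = _ := prod_orbitSize σ fun p => ∑ a, (ε a : ℤ) ^ (p + 1)

end ColourSum

section OddCycles

variable {n : ℕ}

lemma parts_partition_eq_fullCycleType (σ : Equiv.Perm (Fin n)) :
    σ.partition.parts = fullCycleType n σ := by
  rw [Equiv.Perm.parts_partition, Fintype.card_fin, fullCycleType]

lemma sum_fullCycleType (σ : Equiv.Perm (Fin n)) : (fullCycleType n σ).sum = n := by
  rw [← parts_partition_eq_fullCycleType, σ.partition.parts_sum, Fintype.card_fin]

lemma card_filter_odd_modEq_sum (s : Multiset ℕ) :
    Multiset.card (s.filter fun p => p % 2 = 1) ≡ s.sum [MOD 2] := by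
  induction s using Multiset.induction_on with
  | empty => rfl
  | cons p s ih =>
    rw [Multiset.filter_cons, Multiset.card_add, Multiset.sum_cons]
    refine Nat.ModEq.add ?_ ih
    split_ifs with hp
    · exact hp.symm
    · exact (Nat.mod_two_ne_one.mp hp).symm

lemma numOddCycles_modEq (σ : Equiv.Perm (Fin n)) : numOddCycles n σ ≡ n [MOD 2] := by
  have h := card_filter_odd_modEq_sum (fullCycleType n σ)
  rwa [sum_fullCycleType] at h

lemma numOddCycles_le (σ : Equiv.Perm (Fin n)) : numOddCycles n σ ≤ n := by
  have one_le (p : ℕ) (hp : p ∈ fullCycleType n σ) : 1 ≤ p :=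
    σ.partition.parts_pos (parts_partition_eq_fullCycleType σ ▸ hp)
  calc numOddCycles n σ ≤ Multiset.card (fullCycleType n σ) :=
        Multiset.card_le_card (Multiset.filter_le _ _)
    _ ≤ (fullCycleType n σ).sum := by simpa using Multiset.card_nsmul_le_sum one_le
    _ = n := sum_fullCycleType σ

lemma sum_alternatingSign_pow (k p : ℕ) :
    ∑ a, (alternatingSign (2 * k + 1) a : ℤ) ^ (p + 1) =
      if p % 2 = 1 then 2 * (k : ℤ) + 1 else 1 := by
  have term_eq (a : ℕ) : (((-1 : ℤˣ) ^ a : ℤˣ) : ℤ) ^ (p + 1) = ((-1) ^ (p + 1)) ^ a := by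
    rw [Units.val_pow_eq_pow_val, pow_right_comm]
    rfl
  simp only [alternatingSign, term_eq]
  rw [Fin.sum_univ_eq_sum_range fun a => ((-1 : ℤ) ^ (p + 1)) ^ a]
  split_ifs with hp
  · simp [(Nat.odd_iff.mpr hp).add_one.neg_one_pow]
  · rw [(Nat.even_iff.mpr (Nat.mod_two_ne_one.mp hp)).add_one.neg_one_pow, neg_one_geom_sum,
      if_neg (by simp)]

lemma prod_map_ite_one {ι M : Type*} [CommMonoid M] (s : Multiset ι) (P : ι → Prop)
    [DecidablePred P] (x : M) :
    (s.map fun p => if P p then x else 1).prod = x ^ Multiset.card (s.filter P) := by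
  induction s using Multiset.induction_on with
  | empty => simp
  | cons a s ih =>
    by_cases h : P a <;> simp [h, ih, pow_succ']

lemma sum_signOn_alternatingSign (k : ℕ) (σ : Equiv.Perm (Fin n)) :
    ∑ c : Fin n → Fin (2 * k + 1) with c ∘ σ = c,
      (signOn (fun i => alternatingSign (2 * k + 1) (c i) = -1) σ : ℤ) =
      (2 * k + 1) ^ numOddCycles n σ := by
  rw [sum_signOn_eq_prod_parts]
  simp only [sum_alternatingSign_pow]
  rw [prod_map_ite_one, parts_partition_eq_fullCycleType]
  rfl

end OddCycles

section SignedCount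

variable {α A : Type*} {ε : A → ℤˣ} {b : α → A × A} {π : Equiv.Perm α}

lemma apply_sq_of_comp_eq_swap_comp (hπ : b ∘ π = Prod.swap ∘ b) (i : α) :
    b ((π ^ 2) i) = b i := by
  have hπ (i : α) : b (π i) = (b i).swap := congrFun hπ i
  rw [pow_two, Equiv.Perm.mul_apply, hπ, hπ, Prod.swap_swap]

lemma apply_swap_of_apply_eq [DecidableEq α] {B : Type*} {f : α → B} {x y : α}
    (hxy : f x = f y) (i : α) : f (Equiv.swap x y i) = f i := by
  rw [Equiv.swap_apply_def]
  split_ifs with hx hy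
  · rw [hx, hxy]
  · rw [hy, hxy]
  · rfl

variable [Fintype α] [DecidableEq α]

lemma sum_signOn_sq_eq_sum_biwords [Fintype A] [DecidableEq A] (ε : A → ℤˣ) (π : Equiv.Perm α) :
    ∑ c : α → A with c ∘ ⇑(π ^ 2) = c, (signOn (fun i => ε (c i) = -1) (π ^ 2) : ℤ) =
      ∑ b : α → A × A with b ∘ π = Prod.swap ∘ b,
        (signOn (fun i => ε (b i).1 = -1) (π ^ 2) : ℤ) := by
  refine Finset.sum_nbij' (fun c i => (c i, c (π i))) (fun b => Prod.fst ∘ b) ?_ ?_ ?_ ?_ ?_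
  · intro c hc
    rw [Finset.mem_filter_univ] at hc ⊢
    exact funext fun i => Prod.ext rfl (congrFun hc i)
  · intro b hb
    rw [Finset.mem_filter_univ] at hb ⊢
    exact funext fun i => congrArg Prod.fst (apply_sq_of_comp_eq_swap_comp hb i)
  · intro c _
    rfl
  · intro b hb
    rw [Finset.mem_filter_univ] at hb
    exact funext fun i => Prod.ext rfl (congrArg Prod.fst (congrFun hb i))
  · intro c _
    rfl

-- Exactly one of the columns `b x` and `b (π x) = (b x).swap` has a negative top letter, so that
-- exactly one of the two transpositions in `(π * swap x y) ^ 2` changes the sign.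
lemma signOn_mul_swap_sq (hπ : b ∘ π = Prod.swap ∘ b) {x y : α} (hne : x ≠ y) (hxy : b x = b y)
    (hε : ε (b x).1 ≠ ε (b x).2) :
    signOn (fun i => ε (b i).1 = -1) ((π * Equiv.swap x y) ^ 2) =
      -signOn (fun i => ε (b i).1 = -1) (π ^ 2) := by
  have apply_π (i : α) : b (π i) = (b i).swap := congrFun hπ i
  have b_sq := apply_sq_of_comp_eq_swap_comp hπ
  have hxy' : b (π x) = b (π y) := by rw [apply_π, apply_π, hxy]
  have b_swap := apply_swap_of_apply_eq hxy
  have b_swap' := apply_swap_of_apply_eq hxy'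
  have sq_eq : (π * Equiv.swap x y) ^ 2 = Equiv.swap (π x) (π y) * (π ^ 2 * Equiv.swap x y) := by
    rw [pow_two, pow_two]
    nth_rw 1 [Equiv.mul_swap_eq_swap_mul]
    simp only [mul_assoc]
  rw [sq_eq, signOn_mul (by simp [b_swap']) (by simp [b_swap, b_sq]),
    signOn_mul (by simp [b_sq]) (by simp [b_swap])]
  have top_π : ε (b (π x)).1 = ε (b x).2 := by rw [apply_π, Prod.fst_swap]
  obtain h | h := Int.units_eq_one_or (ε (b x).1)
  · have h' : ε (b x).2 = -1 := (Int.units_ne_iff_eq_neg.mp hε.symm).trans (by rw [h])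
    rw [signOn_swap (π.injective.ne hne) (by rw [top_π, h']) (by rw [← hxy', top_π, h']),
      signOn_swap_of_not (by simp [h]) (by simp [← hxy, h])]
    simp
  · have h' : ε (b x).2 = 1 := (Int.units_ne_iff_eq_neg.mp hε.symm).trans (by rw [h, neg_neg])
    rw [signOn_swap_of_not (by simp [h', top_π]) (by simp [← hxy', h', top_π]),
      signOn_swap hne h (hxy ▸ h)]
    simp

lemma signOn_sq_eq_one (hπ : b ∘ π = Prod.swap ∘ b) (hmixed : MixedInjective ε b) :
    signOn (fun i => ε (b i).1 = -1) (π ^ 2) = 1 := by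
  have apply_π (i : α) : b (π i) = (b i).swap := congrFun hπ i
  have b_sq := apply_sq_of_comp_eq_swap_comp hπ
  have both_negative_iff (i : α) :
      (ε (b (π i)).1 = -1 ∧ ε (b (π i)).2 = -1) ↔ (ε (b i).1 = -1 ∧ ε (b i).2 = -1) := by
    rw [apply_π, Prod.fst_swap, Prod.snd_swap, and_comm]
  rw [signOn_eq_of_fixed (Q := fun i => ε (b i).1 = -1 ∧ ε (b i).2 = -1) (by simp [b_sq])
    (fun _ => And.left) fun i hi hi' => ?_, signOn_sq both_negative_iff]
  refine hmixed (b_sq i) fun h => hi' ⟨hi, ?_⟩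
  rw [← b_sq, ← h, b_sq, hi]

end SignedCount

section Cancellation

variable {n K : ℕ} {ε : Fin K → ℤˣ} {b : Fin n → Fin K × Fin K}

lemma mul_swap_mem_rowSwaps_iff {x y : Fin n} (hxy : b x = b y) (π : Equiv.Perm (Fin n)) :
    π * Equiv.swap x y ∈ rowSwaps b ↔ π ∈ rowSwaps b := by
  have b_swap : b ∘ Equiv.swap x y = b := funext (apply_swap_of_apply_eq hxy)
  rw [mem_rowSwaps, mem_rowSwaps, Equiv.Perm.coe_mul, ← Function.comp_assoc]
  nth_rw 2 [← b_swap]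
  rw [← Function.comp_assoc]
  exact (Equiv.swap x y).surjective.injective_comp_right.eq_iff

lemma sum_signOn_sq_eq_zero (hmixed : ¬MixedInjective ε b) :
    ∑ π ∈ rowSwaps b, (signOn (fun i => ε (b i).1 = -1) (π ^ 2) : ℤ) = 0 := by
  simp only [MixedInjective, not_forall] at hmixed
  obtain ⟨x, y, hxy, hε, hne⟩ := hmixed
  refine Finset.sum_involution (fun π _ => π * Equiv.swap x y) ?_ ?_ ?_ ?_
  · intro π hπ
    rw [signOn_mul_swap_sq (mem_rowSwaps.mp hπ) hne hxy hε, Units.val_neg, add_neg_cancel]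
  · intro π _ _ h
    exact hne (Equiv.swap_eq_one_iff.mp (mul_eq_left.mp h))
  · exact fun π hπ => (mul_swap_mem_rowSwaps_iff hxy π).mpr hπ
  · intro π _
    exact Equiv.mul_swap_mul_self x y π

lemma sum_signOn_sq (b : Fin n → Fin K × Fin K) :
    ∑ π ∈ rowSwaps b, (signOn (fun i => ε (b i).1 = -1) (π ^ 2) : ℤ) =
      if IsGood ε b then ((rowSwaps b).card : ℤ) else 0 := by
  by_cases hmixed : MixedInjective ε b
  · have sum_eq : ∑ π ∈ rowSwaps b, (signOn (fun i => ε (b i).1 = -1) (π ^ 2) : ℤ) =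
        (rowSwaps b).card := by
      rw [Finset.card_eq_sum_ones, Nat.cast_sum]
      refine Finset.sum_congr rfl fun π hπ => ?_
      rw [signOn_sq_eq_one (mem_rowSwaps.mp hπ) hmixed, Units.val_one, Nat.cast_one]
    split_ifs with hb
    · exact sum_eq
    · rw [sum_eq, Nat.cast_eq_zero, Finset.card_eq_zero, Finset.eq_empty_iff_forall_notMem]
      exact fun π hπ => hb ⟨hmixed, π, mem_rowSwaps.mp hπ⟩
  · rw [sum_signOn_sq_eq_zero hmixed, if_neg fun hb => hmixed hb.1]

lemma sum_sum_signOn_sq (ε : Fin K → ℤˣ) :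
    ∑ π : Equiv.Perm (Fin n), ∑ c : Fin n → Fin K with c ∘ ⇑(π ^ 2) = c,
      (signOn (fun i => ε (c i) = -1) (π ^ 2) : ℤ) =
      n.factorial * ∑ τ ∈ invSet n, (compatibleCount ε (permWord τ) : ℤ) := by
  calc _ = ∑ π : Equiv.Perm (Fin n), ∑ b : Fin n → Fin K × Fin K with b ∘ π = Prod.swap ∘ b,
        (signOn (fun i => ε (b i).1 = -1) (π ^ 2) : ℤ) :=
        Finset.sum_congr rfl fun π _ => sum_signOn_sq_eq_sum_biwords ε π
    _ = ∑ b : Fin n → Fin K × Fin K, ∑ π ∈ rowSwaps b,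
        (signOn (fun i => ε (b i).1 = -1) (π ^ 2) : ℤ) :=
        Finset.sum_comm' (by simp [mem_rowSwaps])
    _ = ∑ b : Fin n → Fin K × Fin K with IsGood ε b, ((rowSwaps b).card : ℤ) := by
        simp only [sum_signOn_sq, Finset.sum_filter]
    _ = _ := by exact_mod_cast sum_isGood_card_rowSwaps ε

lemma sum_pow_numOddCycles_sq (n k : ℕ) :
    ∑ π : Equiv.Perm (Fin n), (2 * (k : ℤ) + 1) ^ numOddCycles n (π ^ 2) =
      n.factorial *
        ∑ τ ∈ invSet n, (compatibleCount (alternatingSign (2 * k + 1)) (permWord τ) : ℤ) := by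
  rw [← sum_sum_signOn_sq]
  simp only [sum_signOn_alternatingSign]

end Cancellation

section SeriesIdentity

open PowerSeries

variable (n : ℕ)

lemma sum_apply_numOddCycles_sq {M : Type*} [AddCommMonoid M] (f : ℕ → M) :
    ∑ π : Equiv.Perm (Fin n), f (numOddCycles n (π ^ 2)) =
      ∑ m ∈ (Finset.range (n + 1)).filter (fun m => m % 2 = n % 2), dnk n m • f m := by
  have maps_to : ∀ π ∈ (Finset.univ : Finset (Equiv.Perm (Fin n))),
      numOddCycles n (π ^ 2) ∈ (Finset.range (n + 1)).filter (fun m => m % 2 = n % 2) :=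
    fun π _ => Finset.mem_filter.mpr
      ⟨Finset.mem_range_succ_iff.mpr (numOddCycles_le (π ^ 2)), numOddCycles_modEq (π ^ 2)⟩
  rw [← Finset.sum_fiberwise_of_maps_to maps_to]
  refine Finset.sum_congr rfl fun m _ => ?_
  rw [dnk]
  convert Finset.sum_const (f m) using 2 with π hπ
  rw [(Finset.mem_filter.mp hπ).2]

lemma factorial_mul_sum_enrichedSeries :
    (n.factorial : ℚ⟦X⟧) * ∑ τ ∈ invSet n, enrichedSeries τ =
      ∑ m ∈ (Finset.range (n + 1)).filter (fun m => m % 2 = n % 2),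
        (dnk n m : ℚ⟦X⟧) * ∑ σ : Equiv.Perm (Fin m), enrichedSeries σ := by
  ext k
  have sum_coeff (m : ℕ) :
      ∑ σ : Equiv.Perm (Fin m), coeff k (enrichedSeries σ) = (2 * (k : ℚ) + 1) ^ m := by
    simp only [enrichedSeries, coeff_mk]
    exact_mod_cast (sum_compatibleCount_permWord _).trans (by rw [Fintype.card_fin])
  have sum_invSet_coeff : ∑ π : Equiv.Perm (Fin n), (2 * (k : ℚ) + 1) ^ numOddCycles n (π ^ 2) =
      n.factorial * ∑ τ ∈ invSet n, coeff k (enrichedSeries τ) := by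
    simp only [enrichedSeries, coeff_mk]
    exact_mod_cast sum_pow_numOddCycles_sq n k
  simp only [← nsmul_eq_mul, map_sum, map_nsmul, sum_coeff]
  rw [nsmul_eq_mul, ← sum_invSet_coeff, sum_apply_numOddCycles_sq n fun m => (2 * (k : ℚ) + 1) ^ m]

lemma one_sub_X_pow_mul_sum_enrichedSeries (s : Finset (Equiv.Perm (Fin n))) :
    (1 - X) ^ (n + 1) * ∑ π ∈ s, enrichedSeries π =
      (1 + X) ^ n * ∑ π ∈ s, peakSeries ^ lpk n π := by
  simp only [Finset.mul_sum, one_sub_X_pow_mul_enrichedSeries]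

lemma one_sub_X_pow_two_mul (j : ℕ) :
    (1 - X) ^ (2 * j) = (1 + X) ^ (2 * j) * (1 - peakSeries) ^ j := by
  rw [pow_mul, pow_mul, ← mul_pow]
  congr 1
  linear_combination peakSeries_mul_one_add_X_sq

lemma factorial_mul_sum_peakSeries_pow_lpk :
    (n.factorial : ℚ⟦X⟧) * ∑ τ ∈ invSet n, peakSeries ^ lpk n τ =
      ∑ m ∈ (Finset.range (n + 1)).filter (fun m => m % 2 = n % 2),
        (dnk n m : ℚ⟦X⟧) * (1 - peakSeries) ^ ((n - m) / 2) *
          ∑ σ : Equiv.Perm (Fin m), peakSeries ^ lpk m σ := by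
  refine mul_left_cancel₀ (pow_ne_zero n one_add_X_ne_zero) ?_
  rw [mul_left_comm, ← one_sub_X_pow_mul_sum_enrichedSeries, mul_left_comm,
    factorial_mul_sum_enrichedSeries, Finset.mul_sum, Finset.mul_sum]
  refine Finset.sum_congr rfl fun m hm => ?_
  obtain ⟨hmn, hparity⟩ := Finset.mem_filter.mp hm
  obtain ⟨j, rfl⟩ : ∃ j, n = m + 2 * j := ⟨(n - m) / 2, by grind⟩
  rw [show (m + 2 * j - m) / 2 = j by omega]
  linear_combination
    (dnk (m + 2 * j) m : ℚ⟦X⟧) * (1 - X) ^ (2 * j) *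
      one_sub_X_pow_mul_sum_enrichedSeries m Finset.univ +
    (dnk (m + 2 * j) m : ℚ⟦X⟧) * (1 + X) ^ m *
      (∑ σ : Equiv.Perm (Fin m), peakSeries ^ lpk m σ) * one_sub_X_pow_two_mul j

lemma aeval_injective_of_constantCoeff_eq_zero {R : Type*} [CommRing R] [IsDomain R] {u : R⟦X⟧}
    (hu : constantCoeff u = 0) (hu₀ : u ≠ 0) :
    Function.Injective (Polynomial.aeval (R := R) u) := by
  refine (injective_iff_map_eq_zero _).mpr fun p hp => ?_
  by_contra hp₀
  obtain ⟨q, p_eq, hq⟩ := Polynomial.exists_eq_pow_rootMultiplicity_mul_and_not_dvd p hp₀ 0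
  rw [Polynomial.C_0, sub_zero] at p_eq hq
  have aeval_q : Polynomial.aeval u q = 0 := by
    rw [p_eq, map_mul, map_pow, Polynomial.aeval_X] at hp
    exact (mul_eq_zero.mp hp).resolve_left (pow_ne_zero _ hu₀)
  refine hq (Polynomial.X_dvd_iff.mpr ?_)
  have := congrArg constantCoeff aeval_q
  rw [Polynomial.aeval_def, Polynomial.hom_eval₂, hu, Polynomial.eval₂_at_zero] at this
  simpa using this

end SeriesIdentity

theorem stmt15 (n : ℕ) (hn : 1 ≤ n) :
    (n.factorial : Polynomial ℚ) * ∑ π ∈ invSet n, Polynomial.X ^ lpk n π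
      = ∑ k ∈ (Finset.range (n + 1)).filter (fun k => k % 2 = n % 2),
          (dnk n k : Polynomial ℚ) * (1 - Polynomial.X) ^ ((n - k) / 2)
            * leftPeakP k := by
  apply aeval_injective_of_constantCoeff_eq_zero constantCoeff_peakSeries peakSeries_ne_zero
  simp only [leftPeakP, map_mul, map_sum, map_pow, map_sub, map_one, map_natCast,
    Polynomial.aeval_X]
  exact factorial_mul_sum_peakSeries_pow_lpk n

end
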